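/- arXiv:1806.09968 — 5 statements merged into one kernel-verified Lean document; each statement's English description precedes it below -/
import Mathlib

section
/- Let n, m be positive integers and let a_1, …, a_m ∈ ℝ^n satisfy the complement property. Then there exists a Borel measurable function g : ℝ^m → ℝ^n such that for every x ∈ ℝ^n, g applied to the measurement vector (|⟨a_1, x⟩|², …, |⟨a_m, x⟩|²) equals x or equals -x. That is, a Borel measurable inverse of the phaseless measurement map exists up to a global sign. -/
lemma cp_aux {n m : ℕ} (a : Fin m → Fin n → ℝ) (S : Set (Fin m))
    (h : Submodule.span ℝ (a '' S) = ⊤) (z : Fin n → ℝ)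
    (hz : ∀ j ∈ S, ∑ i, a j i * z i = 0) : z = 0 := by
  have key : ∀ v ∈ Submodule.span ℝ (a '' S), ∑ i, v i * z i = 0 := by
    intro v hv
    induction hv using Submodule.span_induction with
    | mem v hv => obtain ⟨j, hj, rfl⟩ := hv; exact hz j hj
    | zero => simp
    | add u v _ _ hu hv => simp [add_mul, Finset.sum_add_distrib, hu, hv]
    | smul c v _ hv => simp [mul_assoc, ← Finset.mul_sum, hv]
  have h0 := key z (by rw [h]; trivial)
  rw [Finset.sum_eq_zero_iff_of_nonneg (fun i _ => mul_self_nonneg _)] at h0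
  funext i
  exact mul_self_eq_zero.mp (h0 i (Finset.mem_univ i))

/-- If `a_1, …, a_m ∈ ℝ^n` satisfy the complement property
(for every `S ⊆ {1, …, m}`, either `{a_j : j ∈ S}` or `{a_j : j ∉ S}` spans `ℝ^n`),
then there is a Borel measurable `g : ℝ^m → ℝ^n` with
`g (|⟨a_1, x⟩|², …, |⟨a_m, x⟩|²) = x` or `= -x` for every `x`. -/
theorem complement_property_measurable_inverse_up_to_sign
    (n m : ℕ) (hn : 0 < n) (hm : 0 < m) (a : Fin m → Fin n → ℝ)
    (hcp : ∀ S : Set (Fin m),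
      Submodule.span ℝ (a '' S) = ⊤ ∨ Submodule.span ℝ (a '' Sᶜ) = ⊤) :
    ∃ g : (Fin m → ℝ) → (Fin n → ℝ), Measurable g ∧
      ∀ x : Fin n → ℝ,
        g (fun j => |∑ i, a j i * x i| ^ 2) = x ∨
        g (fun j => |∑ i, a j i * x i| ^ 2) = -x := by
  set f : (Fin n → ℝ) → (Fin m → ℝ) := fun x j => |∑ i, a j i * x i| ^ 2 with hf
  have hfc : Continuous f := by fun_prop
  have hneg : ∀ x, f (-x) = f x := by
    intro x; funext j; simp [hf]
  have hinj : ∀ x y, f x = f y → x = y ∨ x = -y := by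
    intro x y hxy
    have hp : ∀ j, (∑ i, a j i * (x - y) i) = 0 ∨ (∑ i, a j i * (x + y) i) = 0 := by
      intro j
      have h := congrFun hxy j
      simp only [hf, sq_abs] at h
      simp only [Pi.sub_apply, Pi.add_apply, mul_sub, mul_add, Finset.sum_add_distrib,
        Finset.sum_sub_distrib]
      rw [← mul_eq_zero]
      linear_combination h
    rcases hcp {j | (∑ i, a j i * (x - y) i) = 0} with h | h
    · left
      exact sub_eq_zero.mp (cp_aux a _ h _ (fun j hj => hj))
    · right
      exact eq_neg_of_add_eq_zero_left
        (cp_aux a _ h _ (fun j hj => (hp j).resolve_left hj))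
  let T : Set (Fin n → ℝ) := {x | ∀ i, (∀ j < i, x j = 0) → 0 ≤ x i}
  have hT : MeasurableSet T := by
    have : T = ⋂ i, ((⋂ j, ⋂ (_ : j < i), {x : Fin n → ℝ | x j = 0})ᶜ ∪ {x | 0 ≤ x i}) := by
      ext x
      simp only [T, Set.mem_setOf_eq, Set.mem_iInter, Set.mem_union, Set.mem_compl_iff,
        imp_iff_not_or]
    rw [this]
    refine MeasurableSet.iInter fun i => MeasurableSet.union (MeasurableSet.compl
      (MeasurableSet.iInter fun j => MeasurableSet.iInter fun _ => ?_)) ?_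
    · exact measurableSet_eq_fun (measurable_pi_apply j) measurable_const
    · exact measurableSet_le measurable_const (measurable_pi_apply i)
  have hT1 : ∀ x, x ∈ T → -x ∈ T → x = 0 := by
    intro x h1 h2
    have : ∀ i, x i = 0 := by
      intro i
      induction i using WellFoundedLT.induction with
      | ind i ih =>
        have := h1 i ih
        have := h2 i (fun j hj => by simp [ih j hj])
        simp only [Pi.neg_apply] at this
        linarith
    exact funext this
  have hT2 : ∀ x, x ∈ T ∨ -x ∈ T := by
    intro x
    by_contra! h
    obtain ⟨h1, h2⟩ := h
    simp only [T, Set.mem_setOf_eq, not_forall, not_le, Pi.neg_apply, neg_eq_zero] at h1 h2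
    obtain ⟨i, hi, hi'⟩ := h1
    obtain ⟨k, hk, hk'⟩ := h2
    rcases lt_trichotomy i k with h | h | h
    · have := hk i h; linarith
    · subst h; linarith
    · have := hi k h; linarith
  have hTinj : Set.InjOn f T := by
    intro x hx y hy hxy
    rcases hinj x y hxy with h | h
    · exact h
    · have := hT1 y hy (h ▸ hx)
      simp [h, this]
  have hemb : MeasurableEmbedding (T.restrict f) :=
    hfc.continuousOn.measurableEmbedding hT hTinj
  obtain ⟨g, hg, hgf⟩ := hemb.exists_measurable_extend
    (measurable_subtype_coe : Measurable (Subtype.val : T → Fin n → ℝ)) (fun _ => ⟨0⟩)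
  have hgT : ∀ x ∈ T, g (f x) = x := fun x hx => congrFun hgf ⟨x, hx⟩
  refine ⟨g, hg, fun x => ?_⟩
  change g (f x) = x ∨ g (f x) = -x
  rcases hT2 x with h | h
  · exact Or.inl (hgT x h)
  · right
    rw [← hneg x]
    exact hgT _ h
end

section
/- Let n, m be positive integers and let a_1, …, a_m ∈ ℝ^n have the complement property. Then the phaseless measurement map f : ℝ^n → ℝ^m, f(x)_j = |⟨a_j, x⟩|², is injective up to a global sign: for all x, y ∈ ℝ^n, if |⟨a_j, x⟩|² = |⟨a_j, y⟩|² for all j = 1, …, m, then y = x or y = -x. -/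
theorem aux_span_orth {n m : ℕ} (a : Fin m → Fin n → ℝ) (T : Set (Fin m))
    (h : Submodule.span ℝ (a '' T) = ⊤) (z : Fin n → ℝ)
    (hz : ∀ j ∈ T, a j ⬝ᵥ z = 0) : z = 0 := by
  have key : ∀ w ∈ Submodule.span ℝ (a '' T), w ⬝ᵥ z = 0 := by
    intro w hw
    induction hw using Submodule.span_induction with
    | mem w hw =>
      obtain ⟨j, hj, rfl⟩ := hw
      exact hz j hj
    | zero => exact zero_dotProduct z
    | add u v _ _ hu hv => rw [add_dotProduct, hu, hv, add_zero]
    | smul c u _ hu => rw [smul_dotProduct, hu, smul_zero]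
  exact dotProduct_self_eq_zero.mp (key z (by rw [h]; trivial))

/-- If `a_1, …, a_m ∈ ℝ^n` have the complement property, then the
phaseless measurement map `f(x)_j = |⟨a_j, x⟩|²` is injective up to a global
sign. -/
theorem complement_property_injective_up_to_sign
    (n m : ℕ) (hn : 0 < n) (hm : 0 < m) (a : Fin m → Fin n → ℝ)
    (hcp : ∀ S : Set (Fin m),
      Submodule.span ℝ (a '' S) = ⊤ ∨ Submodule.span ℝ (a '' Sᶜ) = ⊤) :
    ∀ x y : Fin n → ℝ,
      (∀ j, |∑ i, a j i * x i| ^ 2 = |∑ i, a j i * y i| ^ 2) →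
      y = x ∨ y = -x := by
  intro x y hxy
  have hj : ∀ j, a j ⬝ᵥ x = a j ⬝ᵥ y ∨ a j ⬝ᵥ x = -(a j ⬝ᵥ y) := by
    intro j
    have h := hxy j
    rw [sq_abs, sq_abs] at h
    exact sq_eq_sq_iff_eq_or_eq_neg.mp h
  rcases hcp {j | a j ⬝ᵥ x = a j ⬝ᵥ y} with h | h
  · left
    refine sub_eq_zero.mp (aux_span_orth a _ h (y - x) ?_)
    intro j hjS
    rw [dotProduct_sub, sub_eq_zero]
    exact hjS.symm
  · right
    refine eq_neg_of_add_eq_zero_left (aux_span_orth a _ h (y + x) ?_)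
    intro j hjS
    rw [dotProduct_add]
    have := (hj j).resolve_left hjS
    linarith
end

section
/- Let n, m be positive integers and let a_1, …, a_m ∈ ℝ^n. Suppose the phaseless measurement map f : ℝ^n → ℝ^m, f(x)_j = |⟨a_j, x⟩|², is injective up to a global sign, i.e., whenever |⟨a_j, x⟩|² = |⟨a_j, y⟩|² for all j, one has y = x or y = -x. Then the family a_1, …, a_m has the complement property: for every subset S ⊆ {1, …, m}, either {a_j : j ∈ S} spans ℝ^n or {a_j : j ∉ S} spans ℝ^n. -/
lemma exists_perp_aux {n : ℕ} (T : Set (Fin n → ℝ)) (h : Submodule.span ℝ T ≠ ⊤) :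
    ∃ u : Fin n → ℝ, u ≠ 0 ∧ ∀ t ∈ T, ∑ i, t i * u i = 0 := by
  obtain ⟨f, hf, hle⟩ := Submodule.exists_le_ker_of_lt_top _ (lt_top_iff_ne_top.2 h)
  have key : ∀ t : Fin n → ℝ, f t = ∑ i, t i * f (Pi.single i 1) := by
    intro t
    have h1 := LinearMap.pi_apply_eq_sum_univ f t
    rw [h1]
    refine Finset.sum_congr rfl fun i _ => ?_
    rw [smul_eq_mul]
    congr 2
    funext j
    simp [Pi.single_apply, eq_comm]
  refine ⟨fun i => f (Pi.single i 1), ?_, ?_⟩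
  · intro h0
    apply hf
    refine LinearMap.ext fun t => ?_
    have h2 : ∀ i, f (Pi.single i 1) = 0 := fun i => congrFun h0 i
    rw [key]; simp [h2]
  · intro t ht
    rw [← key]
    exact hle (Submodule.subset_span ht)

/-- If the phaseless measurement map `f(x)_j = |⟨a_j, x⟩|²` is
injective up to a global sign, then `a_1, …, a_m ∈ ℝ^n` have the complement
property. -/
theorem injective_up_to_sign_complement_property
    (n m : ℕ) (hn : 0 < n) (hm : 0 < m) (a : Fin m → Fin n → ℝ)
    (hinj : ∀ x y : Fin n → ℝ,
      (∀ j, |∑ i, a j i * x i| ^ 2 = |∑ i, a j i * y i| ^ 2) →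
      y = x ∨ y = -x) :
    ∀ S : Set (Fin m),
      Submodule.span ℝ (a '' S) = ⊤ ∨ Submodule.span ℝ (a '' Sᶜ) = ⊤ := by
  intro S
  by_contra hcon
  rw [not_or] at hcon
  obtain ⟨u, hu, hu'⟩ := exists_perp_aux _ hcon.1
  obtain ⟨v, hv, hv'⟩ := exists_perp_aux _ hcon.2
  rcases hinj (u + v) (u - v) (fun j => by
    simp only [Pi.add_apply, Pi.sub_apply, mul_add, mul_sub, Finset.sum_add_distrib,
      Finset.sum_sub_distrib]
    by_cases hj : j ∈ S
    · rw [hu' _ ⟨j, hj, rfl⟩]; simp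
    · rw [hv' _ ⟨j, hj, rfl⟩]; simp) with h | h
  · apply hv
    funext i
    have := congrFun h i
    simp only [Pi.add_apply, Pi.sub_apply] at this
    simp only [Pi.zero_apply]
    linarith
  · apply hu
    funext i
    have := congrFun h i
    simp only [Pi.add_apply, Pi.sub_apply, Pi.neg_apply] at this
    simp only [Pi.zero_apply]
    linarith
end

section
/- Let n, m be positive integers with m ≥ 2n - 1, and let a_1, …, a_m ∈ ℝ^n be such that every subset of {a_1, …, a_m} of cardinality n is linearly independent (full spark). Then the phaseless measurement map f : ℝ^n → ℝ^m, f(x)_j = |⟨a_j, x⟩|², is injective up to a global sign: for all x, y ∈ ℝ^n, if |⟨a_j, x⟩|² = |⟨a_j, y⟩|² for all j = 1, …, m, then y = x or y = -x. -/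
theorem key_zero (n m : ℕ) (hn : 0 < n) (a : Fin m → Fin n → ℝ)
    (hfs : ∀ s : Finset (Fin m), s.card = n →
      LinearIndependent ℝ (fun j : s => a j))
    (S : Finset (Fin m)) (hS : n ≤ S.card) (z : Fin n → ℝ)
    (hz : ∀ j ∈ S, a j ⬝ᵥ z = 0) : z = 0 := by
  obtain ⟨T, hTS, hT⟩ := Finset.exists_subset_card_eq hS
  have hli := hfs T hT
  have hne : Nonempty T := by
    obtain ⟨j, hj⟩ := Finset.card_pos.mp (hT ▸ hn)
    exact ⟨⟨j, hj⟩⟩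
  have hspan := hli.span_eq_top_of_card_eq_finrank (by simp [hT])
  have hall : ∀ w : Fin n → ℝ, w ⬝ᵥ z = 0 := by
    intro w
    have hw : w ∈ Submodule.span ℝ (Set.range (fun j : T => a j)) := by
      rw [hspan]; trivial
    induction hw using Submodule.span_induction with
    | mem u hu =>
      obtain ⟨j, rfl⟩ := hu
      exact hz j (hTS j.2)
    | zero => simp
    | add u v _ _ hu hv => rw [add_dotProduct, hu, hv, add_zero]
    | smul c u _ hu => rw [smul_dotProduct, hu, smul_zero]
  exact dotProduct_self_eq_zero.mp (hall z)

/-- If `m ≥ 2n - 1` and `a_1, …, a_m ∈ ℝ^n` is full spark, then the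
phaseless measurement map `f(x)_j = |⟨a_j, x⟩|²` is injective up to a global
sign. -/
theorem fullSpark_injective_up_to_sign
    (n m : ℕ) (hn : 0 < n) (hm : 0 < m) (hmn : 2 * n - 1 ≤ m)
    (a : Fin m → Fin n → ℝ)
    (hfs : ∀ s : Finset (Fin m), s.card = n →
      LinearIndependent ℝ (fun j : s => a j)) :
    ∀ x y : Fin n → ℝ,
      (∀ j, |∑ i, a j i * x i| ^ 2 = |∑ i, a j i * y i| ^ 2) →
      y = x ∨ y = -x := by
  intro x y h
  classical
  have h' : ∀ j, a j ⬝ᵥ y = a j ⬝ᵥ x ∨ a j ⬝ᵥ y = -(a j ⬝ᵥ x) := by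
    intro j
    have hj := h j
    rw [sq_abs, sq_abs] at hj
    exact sq_eq_sq_iff_eq_or_eq_neg.mp hj.symm
  have hc := Finset.card_filter_add_card_filter_not (s := (Finset.univ : Finset (Fin m)))
    (fun j => a j ⬝ᵥ y = a j ⬝ᵥ x)
  rw [Finset.card_univ, Fintype.card_fin] at hc
  rcases le_or_gt n (Finset.univ.filter (fun j => a j ⬝ᵥ y = a j ⬝ᵥ x)).card with h1 | h1
  · left
    refine sub_eq_zero.mp (key_zero n m hn a hfs _ h1 (y - x) ?_)
    intro j hj
    rw [dotProduct_sub, (Finset.mem_filter.mp hj).2, sub_self]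
  · right
    refine eq_neg_of_add_eq_zero_left (key_zero n m hn a hfs
      (Finset.univ.filter (fun j => ¬ a j ⬝ᵥ y = a j ⬝ᵥ x)) (by omega) (y + x) ?_)
    intro j hj
    rw [dotProduct_add, (h' j).resolve_left (Finset.mem_filter.mp hj).2, neg_add_cancel]
end

section
/- Let n ≥ 1 and m be positive integers with m ≤ 2n - 2, and let a_1, …, a_m ∈ ℝ^n be arbitrary. Then the phaseless measurement map f : ℝ^n → ℝ^m, f(x)_j = |⟨a_j, x⟩|², is NOT injective up to a global sign: there exist x, y ∈ ℝ^n with y ≠ x and y ≠ -x such that |⟨a_j, x⟩|² = |⟨a_j, y⟩|² for all j = 1, …, m. -/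
theorem exists_orth_aux (n k : ℕ) (h : k < n) (b : Fin k → Fin n → ℝ) :
    ∃ u : Fin n → ℝ, u ≠ 0 ∧ ∀ j, ∑ i, b j i * u i = 0 := by
  have h1 : LinearMap.ker (Matrix.mulVecLin (Matrix.of b)) ≠ ⊥ := by
    apply LinearMap.ker_ne_bot_of_finrank_lt
    simpa using h
  obtain ⟨u, hu, hu0⟩ := Submodule.exists_mem_ne_zero_of_ne_bot h1
  refine ⟨u, hu0, fun j => ?_⟩
  have := congrFun (LinearMap.mem_ker.1 hu) j
  simpa [Matrix.mulVec, dotProduct] using this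

/-- If `m ≤ 2n - 2`, then for any `a_1, …, a_m ∈ ℝ^n` the phaseless
measurement map `f(x)_j = |⟨a_j, x⟩|²` is not injective up to a global sign:
there exist `x, y` with `y ≠ x`, `y ≠ -x`, and equal measurements. -/
theorem not_injective_up_to_sign_of_few_measurements
    (n m : ℕ) (hn : 1 ≤ n) (hm : 0 < m) (hmn : m ≤ 2 * n - 2)
    (a : Fin m → Fin n → ℝ) :
    ∃ x y : Fin n → ℝ, y ≠ x ∧ y ≠ -x ∧
      ∀ j, |∑ i, a j i * x i| ^ 2 = |∑ i, a j i * y i| ^ 2 := by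
  obtain ⟨u, hu0, hu⟩ := exists_orth_aux n (n - 1) (by omega)
    (fun k => if h : k.val < m then a ⟨k.val, h⟩ else 0)
  obtain ⟨v, hv0, hv⟩ := exists_orth_aux n (n - 1) (by omega)
    (fun k => if h : k.val + (n - 1) < m then a ⟨k.val + (n - 1), h⟩ else 0)
  refine ⟨u + v, u - v, ?_, ?_, fun j => ?_⟩
  · intro h
    apply hv0
    funext i
    have := congrFun h i
    simp only [Pi.add_apply, Pi.sub_apply, Pi.zero_apply] at this ⊢
    linarith
  · intro h
    apply hu0
    funext i
    have := congrFun h i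
    simp only [Pi.add_apply, Pi.sub_apply, Pi.neg_apply, Pi.zero_apply] at this ⊢
    linarith
  · simp only [sq_abs, Pi.add_apply, Pi.sub_apply, mul_add, mul_sub,
      Finset.sum_add_distrib, Finset.sum_sub_distrib]
    have hj := j.isLt
    by_cases hc : j.val < n - 1
    · have := hu ⟨j.val, hc⟩
      simp only [hj, dite_true, Fin.eta] at this
      rw [this]; ring
    · have := hv ⟨j.val - (n - 1), by omega⟩
      have he : j.val - (n - 1) + (n - 1) = j.val := by omega
      simp only [he, hj, dite_true, Fin.eta] at this
      rw [this]; ring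
end
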